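/- Let n ≥ 1 be an odd integer and let ψ be a real with 0 < ψ < 1. Then, as ω → +∞, the mean E_{n,ψ,ω} of the (L)MBD(ψ,ω) tends to (n−1)/2 + ψ and its variance V_{n,ψ,ω} tends to ψ(1−ψ). -/

import Mathlib

open Filter Finset

/-- `K n a ψ ω = Σ_{i=0}^{n−a} C(n−a,i) ψ^i (1−ψ)^{n−a−i} ω^{(n−a−i)(i+a)}`. -/
noncomputable def K (n a : ℕ) (ψ ω : ℝ) : ℝ :=
  ∑ i ∈ Finset.range (n - a + 1),
    (Nat.choose (n - a) i : ℝ) * ψ ^ i * (1 - ψ) ^ (n - a - i) * ω ^ ((n - a - i) * (i + a))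

/-- `τ j = K n j / K n 0`. -/
noncomputable def τ (n j : ℕ) (ψ ω : ℝ) : ℝ := K n j ψ ω / K n 0 ψ ω

/-- pmf of the (L)MBD. -/
noncomputable def lmbd (n : ℕ) (ψ ω : ℝ) (y : ℕ) : ℝ :=
  (Nat.choose n y : ℝ) * ψ ^ y * (1 - ψ) ^ (n - y) * ω ^ ((n - y) * y) / K n 0 ψ ω

/-- mean of the (L)MBD. -/
noncomputable def lmbdMean (n : ℕ) (ψ ω : ℝ) : ℝ :=
  ∑ y ∈ Finset.range (n + 1), (y : ℝ) * lmbd n ψ ω y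

/-- variance of the (L)MBD. -/
noncomputable def lmbdVar (n : ℕ) (ψ ω : ℝ) : ℝ :=
  ∑ y ∈ Finset.range (n + 1), ((y : ℝ) - lmbdMean n ψ ω) ^ 2 * lmbd n ψ ω y

/-!
The pmf of the (L)MBD is the binomial pmf tilted by `ω ^ ((n - y) * y)`. As `ω → ∞` the mass
concentrates where the exponent is largest, and there the limit is the renormalised binomial pmf.
For `n = 2 * m + 1` the largest exponent is `m * (m + 1)`, attained exactly at `m` and `m + 1`,
whose binomial weights are in the ratio `1 - ψ : ψ`; so the limit law is `m + Bernoulli ψ`.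
-/

open scoped Topology

section PowerWeights

variable {ι 𝕜 : Type*} [Field 𝕜] [LinearOrder 𝕜] [IsStrictOrderedRing 𝕜] [TopologicalSpace 𝕜]
  [OrderTopology 𝕜]

lemma tendsto_pow_div_pow_atTop_of_le {p q : ℕ} (hpq : p ≤ q) :
    Tendsto (fun x : 𝕜 => x ^ p / x ^ q) atTop (𝓝 (if p = q then 1 else 0)) := by
  split_ifs with h
  · subst h
    refine tendsto_const_nhds.congr' ?_
    filter_upwards [eventually_ne_atTop 0] with x hx
    exact (div_self (pow_ne_zero p hx)).symm
  · exact tendsto_pow_div_pow_atTop_zero (lt_of_le_of_ne hpq h)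

lemma tendsto_sum_mul_pow_div_pow_atTop {s : Finset ι} {e : ι → ℕ} {d : ℕ}
    (he : ∀ i ∈ s, e i ≤ d) {f : 𝕜 → ι → 𝕜} {g : ι → 𝕜}
    (hf : ∀ i ∈ s, Tendsto (fun x => f x i) atTop (𝓝 (g i))) :
    Tendsto (fun x => (∑ i ∈ s, f x i * x ^ e i) / x ^ d) atTop
      (𝓝 (∑ i ∈ s with e i = d, g i)) := by
  have hterm := tendsto_finsetSum s fun i hi =>
    (hf i hi).mul (tendsto_pow_div_pow_atTop_of_le (𝕜 := 𝕜) (he i hi))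
  simpa only [sum_div, sum_filter, mul_div_assoc, mul_ite, mul_one, mul_zero] using hterm

lemma tendsto_weighted_average_pow_atTop {s : Finset ι} {e : ι → ℕ} {d : ℕ}
    (he : ∀ i ∈ s, e i ≤ d) {c : ι → 𝕜} (hc : ∑ i ∈ s with e i = d, c i ≠ 0)
    {f : 𝕜 → ι → 𝕜} {g : ι → 𝕜} (hf : ∀ i ∈ s, Tendsto (fun x => f x i) atTop (𝓝 (g i))) :
    Tendsto (fun x => (∑ i ∈ s, f x i * (c i * x ^ e i)) / ∑ i ∈ s, c i * x ^ e i) atTop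
      (𝓝 ((∑ i ∈ s with e i = d, g i * c i) / ∑ i ∈ s with e i = d, c i)) := by
  have hnum := tendsto_sum_mul_pow_div_pow_atTop he fun i hi => (hf i hi).mul_const (c i)
  have hden := tendsto_sum_mul_pow_div_pow_atTop he fun i _ =>
    tendsto_const_nhds (x := c i) (f := (atTop : Filter 𝕜))
  refine (hnum.div hden hc).congr' ?_
  filter_upwards [eventually_ne_atTop 0] with x hx
  simp only [Pi.div_apply, mul_assoc]
  exact div_div_div_cancel_right₀ (pow_ne_zero d hx) _ _

end PowerWeights

section Exponent

variable {a b m : ℕ}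

lemma mul_add_mul_pred_eq_of_add_eq_odd (h : a + b = 2 * m + 1) :
    (a * b : ℤ) + (b - m) * (b - m - 1) = m * (m + 1) := by
  have ha : (a : ℤ) = 2 * m + 1 - b := by omega
  rw [ha]
  ring

lemma mul_le_of_add_eq_odd (h : a + b = 2 * m + 1) : a * b ≤ m * (m + 1) := by
  have hnonneg : (0 : ℤ) ≤ (b - m) * (b - m - 1) := by
    rcases le_or_gt b m with hb | hb
    · exact mul_nonneg_of_nonpos_of_nonpos (by omega) (by omega)
    · exact mul_nonneg (by omega) (by omega)
  zify
  linarith [mul_add_mul_pred_eq_of_add_eq_odd h]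

lemma mul_eq_iff_of_add_eq_odd (h : a + b = 2 * m + 1) :
    a * b = m * (m + 1) ↔ b = m ∨ b = m + 1 := by
  have hzero : a * b = m * (m + 1) ↔ ((b : ℤ) - m) * (b - m - 1) = 0 := by
    zify
    constructor <;> intro <;> linarith [mul_add_mul_pred_eq_of_add_eq_odd h]
  rw [hzero, mul_eq_zero]
  omega

lemma filter_range_mul_eq_pair (m : ℕ) :
    {y ∈ range (2 * m + 1 + 1) | (2 * m + 1 - y) * y = m * (m + 1)} = {m, m + 1} := by
  ext y
  simp only [mem_filter, mem_range, mem_insert, mem_singleton]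
  constructor
  · rintro ⟨hy, hmax⟩
    exact (mul_eq_iff_of_add_eq_odd (by omega)).1 hmax
  · intro hy
    exact ⟨by omega, (mul_eq_iff_of_add_eq_odd (by omega)).2 hy⟩

end Exponent

/-- The binomial pmf, that is, the pmf of the (L)MBD at `ω = 1`. -/
noncomputable def binomialWeight (n : ℕ) (ψ : ℝ) (y : ℕ) : ℝ :=
  (Nat.choose n y : ℝ) * ψ ^ y * (1 - ψ) ^ (n - y)

lemma binomialWeight_middle_left (m : ℕ) (ψ : ℝ) :
    binomialWeight (2 * m + 1) ψ m =
      (1 - ψ) * ((Nat.choose (2 * m + 1) m : ℝ) * (ψ * (1 - ψ)) ^ m) := by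
  rw [binomialWeight, show 2 * m + 1 - m = m + 1 by omega, mul_pow]
  ring

lemma binomialWeight_middle_right (m : ℕ) (ψ : ℝ) :
    binomialWeight (2 * m + 1) ψ (m + 1) =
      ψ * ((Nat.choose (2 * m + 1) m : ℝ) * (ψ * (1 - ψ)) ^ m) := by
  rw [binomialWeight, Nat.choose_symm_half, show 2 * m + 1 - (m + 1) = m by omega, mul_pow]
  ring

lemma sum_mul_lmbd (n : ℕ) (ψ ω : ℝ) (f : ℕ → ℝ) :
    ∑ y ∈ range (n + 1), f y * lmbd n ψ ω y =
      (∑ y ∈ range (n + 1), f y * (binomialWeight n ψ y * ω ^ ((n - y) * y))) /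
        ∑ y ∈ range (n + 1), binomialWeight n ψ y * ω ^ ((n - y) * y) := by
  simp only [lmbd, K, binomialWeight, Nat.sub_zero, add_zero, mul_div_assoc, sum_div]

section OddLimit

variable {ψ : ℝ} (m : ℕ)

/-- The test function may vary with `ω`, as the variance requires: it is centred at the mean. -/
lemma tendsto_sum_mul_lmbd (hψ0 : ψ ≠ 0) (hψ1 : ψ ≠ 1) {f : ℝ → ℕ → ℝ} {g : ℕ → ℝ}
    (hf : ∀ y, Tendsto (fun ω => f ω y) atTop (𝓝 (g y))) :
    Tendsto (fun ω => ∑ y ∈ range (2 * m + 1 + 1), f ω y * lmbd (2 * m + 1) ψ ω y) atTop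
      (𝓝 ((1 - ψ) * g m + ψ * g (m + 1))) := by
  set A : ℝ := (Nat.choose (2 * m + 1) m : ℝ) * (ψ * (1 - ψ)) ^ m
  have hA0 : A ≠ 0 := by
    have hchoose : (Nat.choose (2 * m + 1) m : ℝ) ≠ 0 :=
      mod_cast (Nat.choose_pos (by omega)).ne'
    exact mul_ne_zero hchoose (pow_ne_zero m (mul_ne_zero hψ0 (sub_ne_zero.2 hψ1.symm)))
  have hsum (h : ℕ → ℝ) :
      ∑ y ∈ range (2 * m + 1 + 1) with (2 * m + 1 - y) * y = m * (m + 1),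
        h y * binomialWeight (2 * m + 1) ψ y = ((1 - ψ) * h m + ψ * h (m + 1)) * A := by
    rw [filter_range_mul_eq_pair, sum_pair (Nat.ne_of_lt m.lt_succ_self),
      binomialWeight_middle_left, binomialWeight_middle_right]
    ring
  have hweight : ∑ y ∈ range (2 * m + 1 + 1) with (2 * m + 1 - y) * y = m * (m + 1),
      binomialWeight (2 * m + 1) ψ y = A := by
    simpa using hsum 1
  have hexp : ∀ y ∈ range (2 * m + 1 + 1), (2 * m + 1 - y) * y ≤ m * (m + 1) := fun y hy =>
    mul_le_of_add_eq_odd (Nat.sub_add_cancel (mem_range_succ_iff.1 hy))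
  have hlim := tendsto_weighted_average_pow_atTop hexp (hweight ▸ hA0) fun y _ => hf y
  simpa only [sum_mul_lmbd, hsum, hweight, mul_div_cancel_right₀ _ hA0] using hlim

lemma tendsto_lmbdMean (hψ0 : ψ ≠ 0) (hψ1 : ψ ≠ 1) :
    Tendsto (fun ω => lmbdMean (2 * m + 1) ψ ω) atTop (𝓝 (m + ψ)) := by
  have hlim := tendsto_sum_mul_lmbd m hψ0 hψ1 fun y => tendsto_const_nhds (x := (y : ℝ))
  convert hlim using 2
  · rfl
  · push_cast
    ring

lemma tendsto_lmbdVar (hψ0 : ψ ≠ 0) (hψ1 : ψ ≠ 1) :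
    Tendsto (fun ω => lmbdVar (2 * m + 1) ψ ω) atTop (𝓝 (ψ * (1 - ψ))) := by
  have hlim := tendsto_sum_mul_lmbd m hψ0 hψ1 fun y =>
    (tendsto_const_nhds (x := (y : ℝ))).sub (tendsto_lmbdMean m hψ0 hψ1) |>.pow 2
  convert hlim using 2
  · rfl
  · push_cast
    ring

end OddLimit

/-- For `ψ` outside `[0, 1]` the weights are signed, but the normalising constant is still nonzero
for all large `ω`. -/
theorem stmt_13_general {n : ℕ} (hno : Odd n) {ψ : ℝ} (hψ0 : ψ ≠ 0) (hψ1 : ψ ≠ 1) :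
    Tendsto (fun ω : ℝ => lmbdMean n ψ ω) atTop (𝓝 (((n : ℝ) - 1) / 2 + ψ)) ∧
    Tendsto (fun ω : ℝ => lmbdVar n ψ ω) atTop (𝓝 (ψ * (1 - ψ))) := by
  obtain ⟨m, rfl⟩ := hno
  have hcentre : (((2 * m + 1 : ℕ) : ℝ) - 1) / 2 = m := by
    push_cast
    ring
  rw [hcentre]
  exact ⟨tendsto_lmbdMean m hψ0 hψ1, tendsto_lmbdVar m hψ0 hψ1⟩

theorem stmt_13 (n : ℕ) (hn : 1 ≤ n) (hno : Odd n)
    (ψ : ℝ) (hψ0 : 0 < ψ) (hψ1 : ψ < 1) :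
    Filter.Tendsto (fun ω : ℝ => lmbdMean n ψ ω) Filter.atTop
      (nhds (((n : ℝ) - 1) / 2 + ψ)) ∧
    Filter.Tendsto (fun ω : ℝ => lmbdVar n ψ ω) Filter.atTop (nhds (ψ * (1 - ψ))) := by
  exact stmt_13_general hno hψ0.ne' hψ1.ne
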